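/- Let X_1, X_2, ... be an infinite sequence of {0,1}-valued exchangeable random variables. Then the limit η = lim_{n→∞} (1/n) Σ_{i=1}^n X_i exists almost surely, takes values in [0,1], and conditionally on η the variables X_1, X_2, ... are i.i.d. Bernoulli(η); that is, for every positive integer n and all x_1, ..., x_n ∈ {0,1}, almost surely Pr(X_1 = x_1, ..., X_n = x_n | η) = η^s (1−η)^{n−s}, where s = x_1 + ... + x_n. -/

import Mathlib

open MeasureTheory Filter

namespace DeFinettiAux

/-- Almost sure summability from summable expectations. -/
lemma ae_summable_of_integral_le {Ω : Type*} [MeasurableSpace Ω] (P : Measure Ω)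
    (D : ℕ → Ω → ℝ) (hD : ∀ k, Measurable (D k)) (h0 : ∀ k ω, 0 ≤ D k ω)
    (hi : ∀ k, Integrable (D k) P) (c : ℕ → ℝ) (hc : Summable c) (hle : ∀ k, ∫ ω, D k ω ∂P ≤ c k) :
    ∀ᵐ ω ∂P, Summable (fun k => D k ω) := by
  have hc0 : ∀ k, 0 ≤ c k := fun k => (integral_nonneg (h0 k)).trans (hle k)
  have h1 : ∫⁻ ω, ∑' k, ENNReal.ofReal (D k ω) ∂P ≠ ⊤ := by
    rw [lintegral_tsum (fun k => (hD k).ennreal_ofReal.aemeasurable)]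
    have h2 : ∑' k, ∫⁻ ω, ENNReal.ofReal (D k ω) ∂P ≤ ∑' k, ENNReal.ofReal (c k) := by
      refine ENNReal.tsum_le_tsum fun k => ?_
      rw [← ofReal_integral_eq_lintegral_ofReal (hi k) (ae_of_all _ (h0 k))]
      exact ENNReal.ofReal_le_ofReal (hle k)
    refine ne_top_of_le_ne_top ?_ h2
    rw [← ENNReal.ofReal_tsum_of_nonneg hc0 hc]
    exact ENNReal.ofReal_ne_top
  have hm : Measurable (fun ω => ∑' k, ENNReal.ofReal (D k ω)) :=
    Measurable.tsum (fun k => (hD k).ennreal_ofReal)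
  filter_upwards [ae_lt_top hm h1] with ω hω
  have := ENNReal.summable_toReal hω.ne
  refine this.congr fun k => ?_
  rw [ENNReal.toReal_ofReal (h0 k ω)]

/-- Exchangeability, for transpositions of the whole sequence. -/
lemma integral_swap {Ω : Type*} [MeasurableSpace Ω] (P : Measure Ω)
    (X : ℕ → Ω → ℕ) (hmeas : ∀ i, Measurable (X i))
    (hexch : ∀ (n : ℕ) (σ : Equiv.Perm (Fin n)),
      Measure.map (fun ω (i : Fin n) => X (σ i) ω) P
        = Measure.map (fun ω (i : Fin n) => X i ω) P)
    (m : ℕ) (G : (ℕ → ℕ) → ℝ) (hG : ∀ z z' : ℕ → ℕ, (∀ i < m, z i = z' i) → G z = G z')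
    (k l : ℕ) (hk : k < m) (hl : l < m) :
    ∫ ω, G (fun i => X (Equiv.swap k l i) ω) ∂P = ∫ ω, G (fun i => X i ω) ∂P := by
  classical
  let H : (Fin m → ℕ) → ℝ := fun z => G (fun i => if hi : i < m then z ⟨i, hi⟩ else 0)
  have hH : Measurable H := measurable_of_countable H
  let σ : Equiv.Perm (Fin m) := Equiv.swap ⟨k, hk⟩ ⟨l, hl⟩
  have hσ : ∀ i : Fin m, ((σ i : Fin m) : ℕ) = Equiv.swap k l (i : ℕ) := by
    intro i
    simp only [σ, Equiv.swap_apply_def, Fin.ext_iff]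
    split_ifs <;> rfl
  have e1 : ∀ ω, G (fun i => X (Equiv.swap k l i) ω) = H (fun i => X (σ i) ω) := by
    intro ω
    refine hG _ _ fun i hi => ?_
    simp [hi, hσ]
  have e2 : ∀ ω, G (fun i => X i ω) = H (fun i => X i ω) := by
    intro ω
    refine hG _ _ fun i hi => ?_
    simp [hi]
  simp_rw [e1, e2]
  rw [← integral_map (φ := fun ω (i : Fin m) => X (σ i) ω) (f := H)
    (measurable_pi_lambda _ fun i => hmeas _).aemeasurable hH.aestronglyMeasurable,
    ← integral_map (φ := fun ω (i : Fin m) => X i ω) (f := H)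
    (measurable_pi_lambda _ fun i => hmeas _).aemeasurable hH.aestronglyMeasurable, hexch m σ]

/-- The Bernoulli factor. -/
noncomputable def phi (c : ℕ) (t : ℝ) : ℝ := if c = 1 then t else 1 - t

lemma phi_cont (c : ℕ) : Continuous (phi c) := by
  unfold phi; split_ifs <;> fun_prop

lemma phi_mem (c : ℕ) {t : ℝ} (ht : t ∈ Set.Icc (0 : ℝ) 1) : phi c t ∈ Set.Icc (0 : ℝ) 1 := by
  unfold phi; split_ifs
  · exact ht
  · exact ⟨by linarith [ht.2], by linarith [ht.1]⟩

lemma prod_phi_mem (x : ℕ → ℕ) (n : ℕ) (t : ℕ → ℝ) (ht : ∀ i, t i ∈ Set.Icc (0 : ℝ) 1) :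
    ∏ i ∈ Finset.range n, phi (x i) (t i) ∈ Set.Icc (0 : ℝ) 1 :=
  ⟨Finset.prod_nonneg fun i _ => (phi_mem _ (ht i)).1,
    Finset.prod_le_one (fun i _ => (phi_mem _ (ht i)).1) (fun i _ => (phi_mem _ (ht i)).2)⟩

lemma prod_phi_eq (x : ℕ → ℕ) (hx : ∀ i, x i = 0 ∨ x i = 1) (t : ℝ) (n : ℕ) :
    (∑ i ∈ Finset.range n, x i) ≤ n ∧ ∏ i ∈ Finset.range n, phi (x i) t
      = t ^ (∑ i ∈ Finset.range n, x i) * (1 - t) ^ (n - ∑ i ∈ Finset.range n, x i) := by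
  induction n with
  | zero => simp
  | succ n ih =>
    obtain ⟨h1, h2⟩ := ih
    rw [Finset.sum_range_succ, Finset.prod_range_succ, h2]
    rcases hx n with h | h
    · refine ⟨by omega, ?_⟩
      rw [h, add_zero, Nat.succ_sub h1, pow_succ]
      simp [phi]; ring
    · refine ⟨by omega, ?_⟩
      rw [h, Nat.add_sub_add_right, pow_succ]
      simp [phi]; ring

/-- Identification of the conditional expectation by testing against continuous functions. -/
lemma condExp_eq {Ω : Type*} [mΩ : MeasurableSpace Ω] (P : Measure Ω) [IsProbabilityMeasure P]
    (η : Ω → ℝ) (hη : Measurable η) (f : Ω → ℝ) (hf : Measurable f)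
    (hf01 : ∀ ω, f ω ∈ Set.Icc (0 : ℝ) 1) (p : ℝ → ℝ) (hp : Measurable p)
    (hp01 : ∀ ω, p (η ω) ∈ Set.Icc (0 : ℝ) 1)
    (h : ∀ g : ℝ → ℝ, Continuous g → ∫ ω, g (η ω) * f ω ∂P = ∫ ω, g (η ω) * p (η ω) ∂P) :
    ∀ᵐ ω ∂P, (P[f | MeasurableSpace.comap η inferInstance]) ω = p (η ω) := by
  have hint : ∀ u : Ω → ℝ, Measurable u → (∀ ω, u ω ∈ Set.Icc (0 : ℝ) 1) → Integrable u P := by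
    intro u hu h01
    refine Integrable.of_bound hu.aestronglyMeasurable 1 (ae_of_all _ fun ω => ?_)
    rw [Real.norm_eq_abs, abs_of_nonneg (h01 ω).1]
    exact (h01 ω).2
  have hpη : Measurable (fun ω => p (η ω)) := hp.comp hη
  have hfi := hint f hf hf01
  have hpi := hint _ hpη hp01
  have hfin : ∀ u : Ω → ℝ, Integrable u P →
      IsFiniteMeasure (P.withDensity (fun ω => ENNReal.ofReal (u ω))) := fun u hu =>
    isFiniteMeasure_withDensity_ofReal hu.2
  have := hfin f hfi
  have := hfin _ hpi
  have hmeq : Measure.map η (P.withDensity (fun ω => ENNReal.ofReal (f ω)))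
      = Measure.map η (P.withDensity (fun ω => ENNReal.ofReal (p (η ω)))) := by
    refine ext_of_forall_integral_eq_of_IsFiniteMeasure fun g => ?_
    rw [integral_map hη.aemeasurable g.continuous.measurable.aestronglyMeasurable,
      integral_map hη.aemeasurable g.continuous.measurable.aestronglyMeasurable,
      integral_withDensity_eq_integral_toReal_smul hf.ennreal_ofReal (by simp),
      integral_withDensity_eq_integral_toReal_smul hpη.ennreal_ofReal (by simp)]
    have := h g g.continuous
    simp only [smul_eq_mul, ENNReal.toReal_ofReal (hf01 _).1, ENNReal.toReal_ofReal (hp01 _).1]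
    simpa only [mul_comm] using this
  have hset : ∀ s, MeasurableSet[MeasurableSpace.comap η inferInstance] s →
      ∫ ω in s, p (η ω) ∂P = ∫ ω in s, f ω ∂P := by
    rintro s ⟨B, hB, rfl⟩
    have := congrArg (fun ν => ν B) hmeq
    simp only [Measure.map_apply hη hB, withDensity_apply _ (hη hB)] at this
    rw [integral_eq_lintegral_of_nonneg_ae (ae_of_all _ fun ω => (hp01 ω).1)
      hpη.aestronglyMeasurable, integral_eq_lintegral_of_nonneg_ae
      (ae_of_all _ fun ω => (hf01 ω).1) hf.aestronglyMeasurable, this]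
  have hm : MeasurableSpace.comap η inferInstance ≤ mΩ := hη.comap_le
  have hres := ae_eq_condExp_of_forall_setIntegral_eq hm hfi
    (g := fun ω => p (η ω)) (fun s _ _ => hpi.integrableOn) (fun s hs _ => hset s hs)
    (hp.comp (comap_measurable η)).stronglyMeasurable.aestronglyMeasurable
  filter_upwards [hres] with ω hω
  exact hω.symm

/-- Empirical averages. -/
noncomputable def avg {Ω : Type*} (X : ℕ → Ω → ℕ) (n : ℕ) (ω : Ω) : ℝ :=
  (∑ i ∈ Finset.range n, (X i ω : ℝ)) / n

lemma avg_meas {Ω : Type*} [MeasurableSpace Ω] (X : ℕ → Ω → ℕ) (hmeas : ∀ i, Measurable (X i))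
    (n : ℕ) : Measurable (avg X n) := by
  unfold avg
  refine Measurable.div_const (Finset.measurable_fun_sum _ fun i _ => ?_) _
  exact measurable_from_top.comp (hmeas i)

lemma cast_mem {Ω : Type*} (X : ℕ → Ω → ℕ) (hbin : ∀ i ω, X i ω = 0 ∨ X i ω = 1) (i : ℕ) (ω : Ω) :
    (X i ω : ℝ) ∈ Set.Icc (0 : ℝ) 1 := by
  rcases hbin i ω with h | h <;> simp [h]

lemma avg_mem {Ω : Type*} (X : ℕ → Ω → ℕ) (hbin : ∀ i ω, X i ω = 0 ∨ X i ω = 1) (n : ℕ) (ω : Ω) :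
    avg X n ω ∈ Set.Icc (0 : ℝ) 1 := by
  unfold avg
  refine ⟨div_nonneg (Finset.sum_nonneg fun i _ => (cast_mem X hbin i ω).1) n.cast_nonneg, ?_⟩
  refine div_le_one_of_le₀ ?_ n.cast_nonneg
  calc (∑ i ∈ Finset.range n, (X i ω : ℝ)) ≤ ∑ i ∈ Finset.range n, (1 : ℝ) :=
        Finset.sum_le_sum fun i _ => (cast_mem X hbin i ω).2
    _ = n := by simp

lemma integrable_bdd {Ω : Type*} [MeasurableSpace Ω] (P : Measure Ω) [IsProbabilityMeasure P]
    {u : Ω → ℝ} (hu : Measurable u) (C : ℝ) (h : ∀ ω, |u ω| ≤ C) : Integrable u P :=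
  Integrable.of_bound hu.aestronglyMeasurable C (ae_of_all _ h)

lemma pair_moment {Ω : Type*} [MeasurableSpace Ω] (P : Measure Ω) [IsProbabilityMeasure P]
    (X : ℕ → Ω → ℕ)
    (hmeas : ∀ i, Measurable (X i))
    (hbin : ∀ i ω, X i ω = 0 ∨ X i ω = 1)
    (hexch : ∀ (n : ℕ) (σ : Equiv.Perm (Fin n)),
      Measure.map (fun ω (i : Fin n) => X (σ i) ω) P
        = Measure.map (fun ω (i : Fin n) => X i ω) P)
    : ∃ a b : ℝ, a - b ≤ 1 ∧ ∀ i j,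
    ∫ ω, (X i ω : ℝ) * (X j ω : ℝ) ∂P = b + if i = j then a - b else 0 := by
  have hsw : ∀ i j j', i ≠ j → i ≠ j' →
      ∫ ω, (X i ω : ℝ) * (X j ω : ℝ) ∂P = ∫ ω, (X i ω : ℝ) * (X j' ω : ℝ) ∂P := by
    intro i j j' h1 h2
    have := integral_swap P X hmeas hexch (i + j + j' + 1)
      (fun z => (z i : ℝ) * (z j' : ℝ))
      (fun z z' h => by simp only [h i (by omega), h j' (by omega)]) j j' (by omega) (by omega)
    simpa [Equiv.swap_apply_of_ne_of_ne h1 h2] using this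
  have hd : ∀ i, ∫ ω, (X i ω : ℝ) * (X i ω : ℝ) ∂P = ∫ ω, (X 0 ω : ℝ) * (X 0 ω : ℝ) ∂P := by
    intro i
    have := integral_swap P X hmeas hexch (i + 1)
      (fun z => (z 0 : ℝ) * (z 0 : ℝ))
      (fun z z' h => by simp only [h 0 (by omega)]) i 0 (by omega) (by omega)
    simpa using this
  have hsymm : ∀ i j, ∫ ω, (X i ω : ℝ) * (X j ω : ℝ) ∂P = ∫ ω, (X j ω : ℝ) * (X i ω : ℝ) ∂P := by
    intro i j; simp only [mul_comm]
  refine ⟨∫ ω, (X 0 ω : ℝ) * (X 0 ω : ℝ) ∂P, ∫ ω, (X 0 ω : ℝ) * (X 1 ω : ℝ) ∂P, ?_, ?_⟩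
  · have h0 : 0 ≤ ∫ ω, (X 0 ω : ℝ) * (X 1 ω : ℝ) ∂P := integral_nonneg fun ω => by positivity
    have h1 : ∫ ω, (X 0 ω : ℝ) * (X 0 ω : ℝ) ∂P ≤ ∫ ω, (1 : ℝ) ∂P := by
      refine integral_mono_of_nonneg (ae_of_all _ fun ω => by positivity) (integrable_const _)
        (ae_of_all _ fun ω => ?_)
      rcases hbin 0 ω with h | h <;> simp [h]
    simp at h1
    linarith
  · intro i j
    split_ifs with hij
    · subst hij; rw [hd i]; ring
    · rw [add_zero]
      by_cases hi : i = 1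
      · subst hi; rw [hsw 1 j 0 hij (by omega), hsymm]
      · rw [hsw i j 1 hij hi, hsymm, hsw 1 i 0 (Ne.symm hi) (by omega), hsymm]

lemma avg_sq_le {Ω : Type*} [MeasurableSpace Ω] (P : Measure Ω) [IsProbabilityMeasure P]
    (X : ℕ → Ω → ℕ)
    (hmeas : ∀ i, Measurable (X i))
    (hbin : ∀ i ω, X i ω = 0 ∨ X i ω = 1)
    (hexch : ∀ (n : ℕ) (σ : Equiv.Perm (Fin n)),
      Measure.map (fun ω (i : Fin n) => X (σ i) ω) P
        = Measure.map (fun ω (i : Fin n) => X i ω) P)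
    (n m : ℕ) (hn : 0 < n) (hnm : n ≤ m) :
    ∫ ω, (avg X n ω - avg X m ω) ^ 2 ∂P ≤ 1 / n := by
  obtain ⟨a, b, hab, hp⟩ := pair_moment P X hmeas hbin hexch
  have hXm : ∀ i, Measurable (fun ω => (X i ω : ℝ)) := fun i => measurable_from_top.comp (hmeas i)
  have hXi : ∀ i j, Integrable (fun ω => (X i ω : ℝ) * (X j ω : ℝ)) P := by
    intro i j
    refine integrable_bdd P ((hXm i).mul (hXm j)) 1 fun ω => ?_
    rcases hbin i ω with h | h <;> rcases hbin j ω with hb | hb <;> simp [h, hb]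
  have hprod : ∀ n m : ℕ, n ≤ m → ∫ ω, avg X n ω * avg X m ω ∂P
      = (n * m * b + n * (a - b)) / (n * m) := by
    intro n m hnm
    have e : ∀ ω, avg X n ω * avg X m ω = (∑ i ∈ Finset.range n, ∑ j ∈ Finset.range m,
        (X i ω : ℝ) * (X j ω : ℝ)) / (n * m) := by
      intro ω
      unfold avg
      rw [div_mul_div_comm, Finset.sum_mul_sum]
    simp_rw [e]
    rw [integral_div, integral_finsetSum _ fun i _ => integrable_finsetSum _ fun j _ => hXi i j]
    congr 1
    have : ∀ i ∈ Finset.range n, ∫ ω, ∑ j ∈ Finset.range m, (X i ω : ℝ) * (X j ω : ℝ) ∂P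
        = m * b + (a - b) := by
      intro i hi
      rw [integral_finsetSum _ fun j _ => hXi i j]
      simp_rw [hp]
      have : i < m := (Finset.mem_range.1 hi).trans_le hnm
      rw [Finset.sum_add_distrib, Finset.sum_ite_eq]
      simp [this]
    rw [Finset.sum_congr rfl this]
    simp; ring
  have hint : ∀ n m, Integrable (fun ω => avg X n ω * avg X m ω) P := by
    intro n m
    refine integrable_bdd P ((avg_meas X hmeas n).mul (avg_meas X hmeas m)) 1 fun ω => ?_
    have h1 := avg_mem X hbin n ω
    have h2 := avg_mem X hbin m ω
    rw [abs_of_nonneg (mul_nonneg h1.1 h2.1)]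
    exact mul_le_one₀ h1.2 h2.1 h2.2
  have e : ∀ ω, (avg X n ω - avg X m ω) ^ 2
      = avg X n ω * avg X n ω - 2 * (avg X n ω * avg X m ω) + avg X m ω * avg X m ω := by
    intro ω; ring
  simp_rw [e]
  rw [integral_add (f := fun ω => avg X n ω * avg X n ω - 2 * (avg X n ω * avg X m ω))
      ((hint n n).sub ((hint n m).const_mul 2)) (hint m m),
    integral_sub (hint n n) ((hint n m).const_mul 2), integral_const_mul,
    hprod n n le_rfl, hprod n m hnm, hprod m m le_rfl]
  have hn' : (0 : ℝ) < n := by exact_mod_cast hn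
  have hm' : (0 : ℝ) < m := by exact_mod_cast hn.trans_le hnm
  have hnm' : (n : ℝ) ≤ m := by exact_mod_cast hnm
  have : (n * n * b + n * (a - b)) / (n * n) - 2 * ((n * m * b + n * (a - b)) / (n * m))
      + (m * m * b + m * (a - b)) / (m * m) = (a - b) * (1 / (n : ℝ) - 1 / m) := by
    field_simp; ring
  rw [this]
  have h1 : 0 ≤ 1 / (n : ℝ) - 1 / m := sub_nonneg.2 (one_div_le_one_div_of_le hn' hnm')
  have h2 : 0 ≤ 1 / (m : ℝ) := by positivity
  nlinarith

lemma ae_conv {Ω : Type*} [MeasurableSpace Ω] (P : Measure Ω) [IsProbabilityMeasure P]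
    (X : ℕ → Ω → ℕ)
    (hmeas : ∀ i, Measurable (X i))
    (hbin : ∀ i ω, X i ω = 0 ∨ X i ω = 1)
    (hexch : ∀ (n : ℕ) (σ : Equiv.Perm (Fin n)),
      Measure.map (fun ω (i : Fin n) => X (σ i) ω) P
        = Measure.map (fun ω (i : Fin n) => X i ω) P)
    : ∀ᵐ ω ∂P, ∃ l, Tendsto (fun n => avg X n ω) atTop (nhds l) := by
  let c : ℕ → ℕ := fun k => (k + 1) ^ 4
  have hD : ∀ k, Measurable (fun ω => |avg X (c k) ω - avg X (c (k + 1)) ω|) := fun k =>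
    ((avg_meas X hmeas _).sub (avg_meas X hmeas _)).abs
  have hb : ∀ k ω, |avg X (c k) ω - avg X (c (k + 1)) ω| ≤ 1 := by
    intro k ω
    have h1 := avg_mem X hbin (c k) ω
    have h2 := avg_mem X hbin (c (k + 1)) ω
    rw [abs_le]; exact ⟨by linarith [h1.1, h2.2], by linarith [h1.2, h2.1]⟩
  have hDi : ∀ k, Integrable (fun ω => |avg X (c k) ω - avg X (c (k + 1)) ω|) P := fun k =>
    integrable_bdd P (hD k) 1 fun ω => by rw [abs_abs]; exact hb k ω
  have hsq : ∀ k, Integrable (fun ω => (avg X (c k) ω - avg X (c (k + 1)) ω) ^ 2) P := fun k =>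
    integrable_bdd P (((avg_meas X hmeas _).sub (avg_meas X hmeas _)).pow_const 2) 1 fun ω => by
      rw [abs_pow]; exact pow_le_one₀ (abs_nonneg _) (hb k ω)
  have hsum : Summable (fun k : ℕ => 1 / ((k + 1 : ℕ) : ℝ) ^ 2) :=
    (summable_nat_add_iff 1).2 (Real.summable_one_div_nat_pow.2 (by norm_num))
  have hS := ae_summable_of_integral_le P
    (fun k ω => |avg X (c k) ω - avg X (c (k + 1)) ω|) hD (fun k ω => abs_nonneg _) hDi
    _ hsum (by
      intro k
      set r : ℝ := ((k + 1 : ℕ) : ℝ) with hr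
      have hr0 : 0 < r := by rw [hr]; positivity
      have hle := avg_sq_le P X hmeas hbin hexch (c k) (c (k + 1)) (by positivity)
        (Nat.pow_le_pow_left (by omega) 4)
      have hck : ((c k : ℕ) : ℝ) = r ^ 4 := by simp [c, hr]
      rw [hck] at hle
      calc ∫ ω, |avg X (c k) ω - avg X (c (k + 1)) ω| ∂P
          ≤ ∫ ω, (1 / (2 * r ^ 2) + r ^ 2 / 2 * (avg X (c k) ω - avg X (c (k + 1)) ω) ^ 2) ∂P := by
            refine integral_mono (hDi k) ((integrable_const _).add ((hsq k).const_mul _))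
              fun ω => ?_
            set d := avg X (c k) ω - avg X (c (k + 1)) ω
            show |d| ≤ _
            have h3 : 1 / (2 * r ^ 2) + r ^ 2 / 2 * d ^ 2 - |d| = (1 / r - r * |d|) ^ 2 / 2 := by
              rw [← sq_abs d]; field_simp; ring
            nlinarith [sq_nonneg (1 / r - r * |d|)]
        _ = 1 / (2 * r ^ 2) + r ^ 2 / 2 * ∫ ω, (avg X (c k) ω - avg X (c (k + 1)) ω) ^ 2 ∂P := by
            rw [integral_add (integrable_const _) ((hsq k).const_mul _), integral_const_mul]
            simp
        _ ≤ 1 / (2 * r ^ 2) + r ^ 2 / 2 * (1 / r ^ 4) := by gcongr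
        _ = 1 / r ^ 2 := by field_simp; ring)
  filter_upwards [hS] with ω hω
  obtain ⟨l, hl⟩ := cauchySeq_tendsto_of_complete
    (cauchySeq_of_summable_dist (f := fun k => avg X (c k) ω) hω)
  refine ⟨l, tendsto_div_of_monotone_of_exists_subseq_tendsto_div
    (fun n => ∑ i ∈ Finset.range n, (X i ω : ℝ)) l ?_ ?_⟩
  · exact monotone_nat_of_le_succ fun n => by
      rw [Finset.sum_range_succ]; linarith [(cast_mem X hbin n ω).1]
  · intro a ha
    refine ⟨c, ?_, ?_, hl⟩
    · have ht : Tendsto (fun n : ℕ => (1 + 1 / ((n : ℝ) + 1)) ^ 4) atTop (nhds ((1 + 0) ^ 4)) :=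
        (tendsto_const_nhds.add tendsto_one_div_add_atTop_nhds_zero_nat).pow 4
      have := ht.eventually_le_const (u := a) (by simpa using ha)
      filter_upwards [this] with n hn
      have e : ((c (n + 1) : ℕ) : ℝ) = (1 + 1 / ((n : ℝ) + 1)) ^ 4 * (c n : ℝ) := by
        simp only [c]; push_cast
        rw [← mul_pow]; congr 1; field_simp
      rw [e]
      gcongr
    · refine tendsto_atTop_mono (fun n => ?_) tendsto_id
      show n ≤ (n + 1) ^ 4
      calc n ≤ n + 1 := by omega
        _ ≤ (n + 1) ^ 4 := Nat.le_self_pow (by norm_num) _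

lemma step_one {Ω : Type*} [MeasurableSpace Ω] (P : Measure Ω) [IsProbabilityMeasure P]
    (X : ℕ → Ω → ℕ)
    (hmeas : ∀ i, Measurable (X i))
    (hbin : ∀ i ω, X i ω = 0 ∨ X i ω = 1)
    (hexch : ∀ (n : ℕ) (σ : Equiv.Perm (Fin n)),
      Measure.map (fun ω (i : Fin n) => X (σ i) ω) P
        = Measure.map (fun ω (i : Fin n) => X i ω) P)
    (η : Ω → ℝ) (hη : Measurable η) (hη01 : ∀ ω, η ω ∈ Set.Icc (0 : ℝ) 1)
    (hlim : ∀ᵐ ω ∂P, Tendsto (fun n => avg X n ω) atTop (nhds (η ω)))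
    (x : ℕ → ℕ) (k : ℕ) (h : ℝ → ℝ) (hh : Continuous h) :
    ∫ ω, h (η ω) * (∏ i ∈ Finset.range k, phi (x i) (X i ω)) * (X k ω : ℝ) ∂P
      = ∫ ω, h (η ω) * (∏ i ∈ Finset.range k, phi (x i) (X i ω)) * η ω ∂P := by
  have hXm : ∀ i, Measurable (fun ω => (X i ω : ℝ)) := fun i => measurable_from_top.comp (hmeas i)
  obtain ⟨C, hC⟩ := (isCompact_Icc (a := (0 : ℝ)) (b := 1)).exists_bound_of_continuousOn
    hh.continuousOn
  set W : Ω → ℝ := fun ω => ∏ i ∈ Finset.range k, phi (x i) (X i ω) with hW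
  have hWm : Measurable W := Finset.measurable_fun_prod _ fun i _ =>
    (phi_cont (x i)).measurable.comp (hXm i)
  have hW01 : ∀ ω, W ω ∈ Set.Icc (0 : ℝ) 1 := fun ω =>
    prod_phi_mem x k (fun i => (X i ω : ℝ)) fun i => cast_mem X hbin i ω
  have hbd : ∀ s ∈ Set.Icc (0 : ℝ) 1, ∀ ω, ∀ t ∈ Set.Icc (0 : ℝ) 1, ‖h s * W ω * t‖ ≤ C := by
    intro s hs ω t ht
    have hw := hW01 ω
    have h1 := hC s hs
    rw [norm_mul, norm_mul, Real.norm_of_nonneg hw.1, Real.norm_of_nonneg ht.1]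
    have h2 : ‖h s‖ * W ω ≤ ‖h s‖ := mul_le_of_le_one_right (norm_nonneg _) hw.2
    have h3 : ‖h s‖ * W ω * t ≤ ‖h s‖ * W ω :=
      mul_le_of_le_one_right (mul_nonneg (norm_nonneg _) hw.1) ht.2
    linarith
  -- the limit of the finite exchangeability relation
  have hconv : ∀ l, Tendsto (fun n => ∫ ω, h (avg X n ω) * W ω * (X l ω : ℝ) ∂P) atTop
      (nhds (∫ ω, h (η ω) * W ω * (X l ω : ℝ) ∂P)) := by
    intro l
    refine tendsto_integral_of_dominated_convergence (fun _ => C) (fun n => ?_)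
      (integrable_const _) (fun n => ae_of_all _ fun ω => ?_) ?_
    · exact (((hh.measurable.comp (avg_meas X hmeas n)).mul hWm).mul
        (hXm l)).aestronglyMeasurable
    · exact hbd _ (avg_mem X hbin n ω) ω _ (cast_mem X hbin l ω)
    · filter_upwards [hlim] with ω hω
      exact (((hh.tendsto _).comp hω).mul_const _).mul_const _
  have hsame : ∀ l, k ≤ l → ∫ ω, h (η ω) * W ω * (X l ω : ℝ) ∂P
      = ∫ ω, h (η ω) * W ω * (X k ω : ℝ) ∂P := by
    intro l hkl
    refine tendsto_nhds_unique ((hconv l).congr' ?_) (hconv k)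
    filter_upwards [eventually_gt_atTop l] with m hm
    have := integral_swap P X hmeas hexch m
      (fun z => h ((∑ i ∈ Finset.range m, (z i : ℝ)) / m)
        * (∏ i ∈ Finset.range k, phi (x i) (z i)) * (z k : ℝ))
      (fun z z' hz => by
        have e1 : ∑ i ∈ Finset.range m, (z i : ℝ) = ∑ i ∈ Finset.range m, (z' i : ℝ) :=
          Finset.sum_congr rfl fun i hi => by rw [hz i (Finset.mem_range.1 hi)]
        have e2 : ∏ i ∈ Finset.range k, phi (x i) (z i)
            = ∏ i ∈ Finset.range k, phi (x i) (z' i) :=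
          Finset.prod_congr rfl fun i hi => by
            rw [hz i (by have := Finset.mem_range.1 hi; omega)]
        simp only [e1, e2, hz k (by omega)]) k l (by omega) hm
    refine Eq.trans ?_ this
    refine integral_congr_ae (ae_of_all _ fun ω => ?_)
    have e1 : ∑ i ∈ Finset.range m, (X (Equiv.swap k l i) ω : ℝ)
        = ∑ i ∈ Finset.range m, (X i ω : ℝ) := by
      refine Finset.sum_equiv (Equiv.swap k l) (fun i => ?_) (fun i _ => rfl)
      simp only [Finset.mem_range, Equiv.swap_apply_def]
      split_ifs <;> omega
    have e2 : ∏ i ∈ Finset.range k, phi (x i) (X (Equiv.swap k l i) ω) = W ω := by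
      refine Finset.prod_congr rfl fun i hi => ?_
      have := Finset.mem_range.1 hi
      rw [Equiv.swap_apply_of_ne_of_ne (by omega) (by omega)]
    simp only [e1, e2, Equiv.swap_apply_left, avg]
  -- averaging
  have hces := (tendsto_const_nhds (x := ∫ ω, h (η ω) * W ω * (X k ω : ℝ) ∂P)).congr'
    (f₁ := fun _ : ℕ => ∫ ω, h (η ω) * W ω * (X k ω : ℝ) ∂P)
    (f₂ := fun l => ∫ ω, h (η ω) * W ω * (X l ω : ℝ) ∂P) (l₁ := atTop)
    (by filter_upwards [eventually_ge_atTop k] with l hl using (hsame l hl).symm)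
  have hces := hces.cesaro
  have hav : Tendsto (fun n => ∫ ω, h (η ω) * W ω * avg X n ω ∂P) atTop
      (nhds (∫ ω, h (η ω) * W ω * η ω ∂P)) := by
    refine tendsto_integral_of_dominated_convergence (fun _ => C) (fun n => ?_)
      (integrable_const _) (fun n => ae_of_all _ fun ω => ?_) ?_
    · exact (((hh.measurable.comp hη).mul hWm).mul (avg_meas X hmeas n)).aestronglyMeasurable
    · exact hbd _ (hη01 ω) ω _ (avg_mem X hbin n ω)
    · filter_upwards [hlim] with ω hω
      exact hω.const_mul _
  refine tendsto_nhds_unique hces (hav.congr fun n => ?_)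
  rw [← integral_finsetSum, ← integral_const_mul]
  · refine integral_congr_ae (ae_of_all _ fun ω => ?_)
    simp only [avg]
    rw [← Finset.mul_sum]; ring
  · intro l _
    exact integrable_bdd P (((hh.measurable.comp hη).mul hWm).mul (hXm l)) C fun ω =>
      hbd _ (hη01 ω) ω _ (cast_mem X hbin l ω)

lemma all_steps {Ω : Type*} [MeasurableSpace Ω] (P : Measure Ω) [IsProbabilityMeasure P]
    (X : ℕ → Ω → ℕ)
    (hmeas : ∀ i, Measurable (X i))
    (hbin : ∀ i ω, X i ω = 0 ∨ X i ω = 1)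
    (hexch : ∀ (n : ℕ) (σ : Equiv.Perm (Fin n)),
      Measure.map (fun ω (i : Fin n) => X (σ i) ω) P
        = Measure.map (fun ω (i : Fin n) => X i ω) P)
    (η : Ω → ℝ) (hη : Measurable η) (hη01 : ∀ ω, η ω ∈ Set.Icc (0 : ℝ) 1)
    (hlim : ∀ᵐ ω ∂P, Tendsto (fun n => avg X n ω) atTop (nhds (η ω)))
    (x : ℕ → ℕ) (n : ℕ) : ∀ (h : ℝ → ℝ), Continuous h →
    ∫ ω, h (η ω) * (∏ i ∈ Finset.range n, phi (x i) (X i ω)) ∂P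
      = ∫ ω, h (η ω) * (∏ i ∈ Finset.range n, phi (x i) (η ω)) ∂P := by
  induction n with
  | zero => intro h _; simp
  | succ k ih =>
    intro h hh
    have hXm : ∀ i, Measurable (fun ω => (X i ω : ℝ)) :=
      fun i => measurable_from_top.comp (hmeas i)
    have hstep := step_one P X hmeas hbin hexch η hη hη01 hlim x k h hh
    have hi := ih (fun t => h t * phi (x k) t) (hh.mul (phi_cont _))
    obtain ⟨C, hC⟩ := (isCompact_Icc (a := (0 : ℝ)) (b := 1)).exists_bound_of_continuousOn
      hh.continuousOn
    set W : Ω → ℝ := fun ω => ∏ i ∈ Finset.range k, phi (x i) (X i ω) with hW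
    have hWm : Measurable W := Finset.measurable_fun_prod _ fun i _ =>
      (phi_cont (x i)).measurable.comp (hXm i)
    have hW01 : ∀ ω, W ω ∈ Set.Icc (0 : ℝ) 1 := fun ω =>
      prod_phi_mem x k (fun i => (X i ω : ℝ)) fun i => cast_mem X hbin i ω
    have hint : ∀ u : Ω → ℝ, Measurable u → (∀ ω, u ω ∈ Set.Icc (0 : ℝ) 1) →
        Integrable (fun ω => h (η ω) * W ω * u ω) P := by
      intro u hu hu01
      refine integrable_bdd P (((hh.measurable.comp hη).mul hWm).mul hu) C fun ω => ?_
      have hw := hW01 ω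
      have ht := hu01 ω
      have h1 := hC _ (hη01 ω)
      rw [Real.norm_eq_abs] at h1
      rw [abs_mul, abs_mul, abs_of_nonneg hw.1, abs_of_nonneg ht.1]
      have h2 : |h (η ω)| * W ω ≤ |h (η ω)| := mul_le_of_le_one_right (abs_nonneg _) hw.2
      have h3 : |h (η ω)| * W ω * u ω ≤ |h (η ω)| * W ω :=
        mul_le_of_le_one_right (mul_nonneg (abs_nonneg _) hw.1) ht.2
      linarith
    have hphi : ∫ ω, h (η ω) * W ω * phi (x k) (X k ω) ∂P
        = ∫ ω, h (η ω) * W ω * phi (x k) (η ω) ∂P := by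
      unfold phi
      split_ifs with hx
      · exact hstep
      · have h1 := hint (fun _ => 1) measurable_const (fun _ => by simp)
        have h2 := hint _ (hXm k) (cast_mem X hbin k)
        have h3 := hint _ hη hη01
        simp_rw [mul_sub]
        rw [integral_sub h1 h2, integral_sub h1 h3, hstep]
    simp_rw [Finset.prod_range_succ]
    calc ∫ ω, h (η ω) * ((∏ i ∈ Finset.range k, phi (x i) (X i ω)) * phi (x k) (X k ω)) ∂P
        = ∫ ω, h (η ω) * W ω * phi (x k) (X k ω) ∂P := by simp only [hW, mul_assoc]
      _ = ∫ ω, h (η ω) * W ω * phi (x k) (η ω) ∂P := hphi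
      _ = ∫ ω, h (η ω) * phi (x k) (η ω) * W ω ∂P := by
          refine integral_congr_ae (ae_of_all _ fun ω => ?_); simp only; ring
      _ = _ := hi
      _ = _ := by
          refine integral_congr_ae (ae_of_all _ fun ω => ?_); simp only; ring

end DeFinettiAux

/-- **de Finetti's Theorem, conditional independence form.** For an infinite exchangeable
sequence of `{0,1}`-valued random variables, the limiting relative frequency `η` of ones
exists almost surely, takes values in `[0,1]`, and conditionally on `η` the variables are
i.i.d. Bernoulli(`η`). -/
theorem deFinetti_conditional
    {Ω : Type*} [MeasurableSpace Ω] (ℙ : Measure Ω) [IsProbabilityMeasure ℙ]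
    (X : ℕ → Ω → ℕ)
    (hmeas : ∀ i, Measurable (X i))
    (hbin : ∀ i ω, X i ω = 0 ∨ X i ω = 1)
    (hexch : ∀ (n : ℕ) (σ : Equiv.Perm (Fin n)),
      Measure.map (fun ω (i : Fin n) => X (σ i) ω) ℙ
        = Measure.map (fun ω (i : Fin n) => X i ω) ℙ) :
    ∃ η : Ω → ℝ, Measurable η ∧
      (∀ᵐ ω ∂ℙ, Tendsto (fun n : ℕ => (∑ i ∈ Finset.range n, (X i ω : ℝ)) / n)
        atTop (nhds (η ω))) ∧
      (∀ᵐ ω ∂ℙ, η ω ∈ Set.Icc (0 : ℝ) 1) ∧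
      ∀ (n : ℕ), 0 < n → ∀ x : Fin n → ℕ, (∀ i, x i = 0 ∨ x i = 1) →
        ∀ᵐ ω ∂ℙ,
          (ℙ[Set.indicator {ω' | ∀ i : Fin n, X i ω' = x i} (fun _ => (1 : ℝ)) |
              MeasurableSpace.comap η inferInstance]) ω
            = η ω ^ (∑ i, x i) * (1 - η ω) ^ (n - ∑ i, x i) := by
  classical
  let η : Ω → ℝ := fun ω => max 0 (min 1 (limsup (fun n => DeFinettiAux.avg X n ω) atTop))
  have hη : Measurable η := measurable_const.max (measurable_const.min
    (Measurable.limsup fun n => DeFinettiAux.avg_meas X hmeas n))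
  have hη01 : ∀ ω, η ω ∈ Set.Icc (0 : ℝ) 1 := fun ω =>
    ⟨le_max_left _ _, max_le zero_le_one (min_le_left _ _)⟩
  have hlim : ∀ᵐ ω ∂ℙ, Tendsto (fun n => DeFinettiAux.avg X n ω) atTop (nhds (η ω)) := by
    filter_upwards [DeFinettiAux.ae_conv ℙ X hmeas hbin hexch] with ω ⟨l, hl⟩
    have hl01 : l ∈ Set.Icc (0 : ℝ) 1 :=
      isClosed_Icc.mem_of_tendsto hl (Eventually.of_forall fun n => DeFinettiAux.avg_mem X hbin n ω)
    have : η ω = l := by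
      simp only [η]
      rw [hl.limsup_eq, min_eq_right hl01.2, max_eq_right hl01.1]
    rwa [this]
  refine ⟨η, hη, hlim, ae_of_all _ hη01, ?_⟩
  intro n _ x hx
  let y : ℕ → ℕ := fun i => if hi : i < n then x ⟨i, hi⟩ else 0
  have hyx : ∀ i : Fin n, y i = x i := fun i => by simp [y]
  have hy : ∀ i, y i = 0 ∨ y i = 1 := by
    intro i
    by_cases hi : i < n
    · simpa [y, hi] using hx ⟨i, hi⟩
    · simp [y, hi]
  have hsum : ∑ i, x i = ∑ i ∈ Finset.range n, y i := by
    rw [Finset.sum_range]; exact Finset.sum_congr rfl fun i _ => (hyx i).symm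
  have hf : (Set.indicator {ω' | ∀ i : Fin n, X i ω' = x i} (fun _ => (1 : ℝ)))
      = fun ω => ∏ i ∈ Finset.range n, DeFinettiAux.phi (y i) (X i ω) := by
    funext ω
    by_cases h : ∀ i : Fin n, X i ω = x i
    · rw [Set.indicator_of_mem (by exact h)]
      symm
      refine Finset.prod_eq_one fun i hi => ?_
      have := h ⟨i, Finset.mem_range.1 hi⟩
      rw [← hyx] at this
      simp only at this
      rw [this]
      rcases hy i with hc | hc <;> simp [hc, DeFinettiAux.phi]
    · rw [Set.indicator_of_notMem (by exact h)]
      symm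
      push Not at h
      obtain ⟨i, hi⟩ := h
      refine Finset.prod_eq_zero (Finset.mem_range.2 i.2) ?_
      rw [← hyx] at hi
      rcases hy i with hc | hc <;> rcases hbin i ω with hd | hd <;>
        simp_all [DeFinettiAux.phi]
  have hXm : ∀ i, Measurable (fun ω => (X i ω : ℝ)) := fun i => measurable_from_top.comp (hmeas i)
  rw [hf]
  have hmain := DeFinettiAux.condExp_eq ℙ η hη
    (fun ω => ∏ i ∈ Finset.range n, DeFinettiAux.phi (y i) (X i ω))
    (Finset.measurable_fun_prod _ fun i _ =>
      (DeFinettiAux.phi_cont (y i)).measurable.comp (hXm i))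
    (fun ω => DeFinettiAux.prod_phi_mem y n (fun i => (X i ω : ℝ))
      fun i => DeFinettiAux.cast_mem X hbin i ω)
    (fun t => ∏ i ∈ Finset.range n, DeFinettiAux.phi (y i) t)
    (Finset.measurable_fun_prod _ fun i _ => (DeFinettiAux.phi_cont (y i)).measurable)
    (fun ω => DeFinettiAux.prod_phi_mem y n (fun _ => η ω) fun _ => hη01 ω)
    (DeFinettiAux.all_steps ℙ X hmeas hbin hexch η hη hη01 hlim y n)
  filter_upwards [hmain] with ω hω
  rw [hω, hsum]
  exact (DeFinettiAux.prod_phi_eq y hy (η ω) n).2
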